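/- There exist nonzero rational numbers C₁, C₂, C₃ such that, in U(𝔤): (E₁₁F₃₂)_L(a) = C₁·H₁₁; (E₁₁²F₃₂²)_L(b) ≡ C₂·H₀₁ (mod U(𝔤)𝔫₊); and (E₁₁³F₃₂³)_L(c) ≡ C₃·H₀₁(H₃₁+2) (mod U(𝔤)𝔫₊). -/

import Mathlib

/-- The canonical embedding of a Lie algebra into its universal enveloping algebra. -/
noncomputable def ιU {L : Type*} [LieRing L] [LieAlgebra ℂ L] (x : L) :
    UniversalEnvelopingAlgebra ℂ L :=
  UniversalEnvelopingAlgebra.ι ℂ x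

/-- The adjoint action `X_L : f ↦ Xf − fX` of `X ∈ L` on `U(L)`. -/
noncomputable def adU {L : Type*} [LieRing L] [LieAlgebra ℂ L] (x : L)
    (f : UniversalEnvelopingAlgebra ℂ L) : UniversalEnvelopingAlgebra ℂ L :=
  ιU x * f - f * ιU x

/-- A Lie algebra over `ℂ` equipped with Chevalley generators of type `G₂`:
`E₁₀, F₁₀, H₁₀` correspond to the short simple root `α` and `E₀₁, F₀₁, H₀₁` to the long
simple root `β`, subject to the Chevalley relations and the Serre relations, and the
generators generate the Lie algebra.  (By Serre's theorem such a Lie algebra is a quotient of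
the simple Lie algebra of type `G₂`.) -/
structure G2Gens (L : Type*) [LieRing L] [LieAlgebra ℂ L] where
  E10 : L
  E01 : L
  F10 : L
  F01 : L
  H10 : L
  H01 : L
  hH10H01 : ⁅H10, H01⁆ = 0
  hE10F10 : ⁅E10, F10⁆ = H10
  hE01F01 : ⁅E01, F01⁆ = H01
  hE10F01 : ⁅E10, F01⁆ = 0
  hE01F10 : ⁅E01, F10⁆ = 0
  hH10E10 : ⁅H10, E10⁆ = (2 : ℂ) • E10
  hH01E01 : ⁅H01, E01⁆ = (2 : ℂ) • E01
  hH10E01 : ⁅H10, E01⁆ = (-3 : ℂ) • E01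
  hH01E10 : ⁅H01, E10⁆ = (-1 : ℂ) • E10
  hH10F10 : ⁅H10, F10⁆ = (-2 : ℂ) • F10
  hH01F01 : ⁅H01, F01⁆ = (-2 : ℂ) • F01
  hH10F01 : ⁅H10, F01⁆ = (3 : ℂ) • F01
  hH01F10 : ⁅H01, F10⁆ = (1 : ℂ) • F10
  serreE1 : ⁅E10, ⁅E10, ⁅E10, ⁅E10, E01⁆⁆⁆⁆ = 0
  serreE2 : ⁅E01, ⁅E01, E10⁆⁆ = 0
  serreF1 : ⁅F10, ⁅F10, ⁅F10, ⁅F10, F01⁆⁆⁆⁆ = 0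
  serreF2 : ⁅F01, ⁅F01, F10⁆⁆ = 0
  generates : LieSubalgebra.lieSpan ℂ L {E10, E01, F10, F01, H10, H01} = ⊤

namespace G2Gens

variable {L : Type*} [LieRing L] [LieAlgebra ℂ L] (g : G2Gens L)

/-- The root vector `E₁₁ = [E₁₀, E₀₁]`. -/
def E11 : L := ⁅g.E10, g.E01⁆
/-- The root vector `E₂₁ = (1/2)[E₁₁, E₁₀]`. -/
noncomputable def E21 : L := (2 : ℂ)⁻¹ • ⁅g.E11, g.E10⁆
/-- The root vector `E₃₁ = (1/3)[E₂₁, E₁₀]`. -/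
noncomputable def E31 : L := (3 : ℂ)⁻¹ • ⁅g.E21, g.E10⁆
/-- The root vector `E₃₂ = [E₃₁, E₀₁]`. -/
noncomputable def E32 : L := ⁅g.E31, g.E01⁆
/-- The root vector `F₁₁ = [F₀₁, F₁₀]`. -/
def F11 : L := ⁅g.F01, g.F10⁆
/-- The root vector `F₂₁ = (1/2)[F₁₀, F₁₁]`. -/
noncomputable def F21 : L := (2 : ℂ)⁻¹ • ⁅g.F10, g.F11⁆
/-- The root vector `F₃₁ = (1/3)[F₁₀, F₂₁]`. -/
noncomputable def F31 : L := (3 : ℂ)⁻¹ • ⁅g.F10, g.F21⁆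
/-- The root vector `F₃₂ = [F₀₁, F₃₁]`. -/
noncomputable def F32 : L := ⁅g.F01, g.F31⁆
/-- The coroot `H₁₁ = H₁₀ + 3H₀₁`. -/
def H11 : L := g.H10 + (3 : ℂ) • g.H01
/-- The coroot `H₂₁ = 2H₁₀ + 3H₀₁`. -/
def H21 : L := (2 : ℂ) • g.H10 + (3 : ℂ) • g.H01
/-- The coroot `H₃₁ = H₁₀ + H₀₁`. -/
def H31 : L := g.H10 + g.H01
/-- The coroot `H₃₂ = H₁₀ + 2H₀₁`. -/
def H32 : L := g.H10 + (2 : ℂ) • g.H01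

/-- The element `a = E₂₁` of `U(𝔤)`. -/
noncomputable def aU : UniversalEnvelopingAlgebra ℂ L := ιU g.E21
/-- The element `b = E₃₁E₁₁ − E₃₂E₁₀` of `U(𝔤)`. -/
noncomputable def bU : UniversalEnvelopingAlgebra ℂ L :=
  ιU g.E31 * ιU g.E11 - ιU g.E32 * ιU g.E10
/-- The element `c = E₃₁²E₀₁ − E₃₂E₃₁H₀₁ − E₃₂²F₀₁` of `U(𝔤)`. -/
noncomputable def cU : UniversalEnvelopingAlgebra ℂ L :=
  ιU g.E31 * ιU g.E31 * ιU g.E01 - ιU g.E32 * ιU g.E31 * ιU g.H01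
    - ιU g.E32 * ιU g.E32 * ιU g.F01
/-- The element `u = (1/3)a² − b` of `U(𝔤)`. -/
noncomputable def uU : UniversalEnvelopingAlgebra ℂ L :=
  (3 : ℂ)⁻¹ • (g.aU * g.aU) - g.bU
/-- The element `v = (2/9)a³ − ab − 3c` of `U(𝔤)`. -/
noncomputable def vU : UniversalEnvelopingAlgebra ℂ L :=
  ((2 : ℂ) / 9) • (g.aU * g.aU * g.aU) - g.aU * g.bU - (3 : ℂ) • g.cU

/-- `f ≡ h (mod U(𝔤)𝔫₊)`:  `f − h` lies in the left ideal of `U(𝔤)` generated by `E₁₀`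
and `E₀₁`. -/
def EqModN (f h : UniversalEnvelopingAlgebra ℂ L) : Prop :=
  ∃ A B : UniversalEnvelopingAlgebra ℂ L, f - h = A * ιU g.E10 + B * ιU g.E01

end G2Gens

set_option linter.unusedSimpArgs false

namespace G2Gens

variable {L : Type*} [LieRing L] [LieAlgebra ℂ L]

/-- Relations in the positive part of type `G₂`, deduced from the Serre relations. -/
theorem pos_rel (x y p q r s : L)
    (h1 : ⁅x, ⁅x, ⁅x, ⁅x, y⁆⁆⁆⁆ = 0) (h2 : ⁅y, ⁅y, x⁆⁆ = 0)
    (hp : ⁅x, y⁆ = p) (hq : ⁅x, p⁆ = (-2 : ℂ) • q) (hr : ⁅x, q⁆ = (-3 : ℂ) • r)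
    (hs : ⁅y, r⁆ = -s) :
    ⁅x, r⁆ = 0 ∧ ⁅y, p⁆ = 0 ∧ ⁅y, q⁆ = 0 ∧ ⁅p, q⁆ = (-3 : ℂ) • s ∧ ⁅x, s⁆ = 0 ∧
      ⁅p, r⁆ = 0 ∧ ⁅y, s⁆ = 0 ∧ ⁅q, r⁆ = 0 ∧ ⁅s, r⁆ = 0 := by
  have hyx : ⁅y, x⁆ = -p := by rw [← lie_skew, hp]
  have a1 : ⁅x, r⁆ = 0 := by
    simpa [hp, hq, hr] using h1
  have a2 : ⁅y, p⁆ = 0 := by rwa [hyx, lie_neg, neg_eq_zero] at h2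
  have hq' : q = (-(2 : ℂ)⁻¹) • ⁅x, p⁆ := by rw [hq]; module
  have hr' : r = (-(3 : ℂ)⁻¹) • ⁅x, q⁆ := by rw [hr]; module
  have a3 : ⁅y, q⁆ = 0 := by
    rw [hq', lie_smul, leibniz_lie, a2, hyx]; simp
  have a4 : ⁅p, q⁆ = (-3 : ℂ) • s := by
    have : -s = (-(3 : ℂ)⁻¹) • (-⁅p, q⁆) := by
      rw [← hs, hr', lie_smul, leibniz_lie, a3, hyx]; simp
    have e : s = (-(3 : ℂ)⁻¹) • ⁅p, q⁆ := by
      rw [← neg_neg s, this]; module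
    rw [e]; module
  have b1 : ⁅x, s⁆ = -⁅p, r⁆ := by
    rw [← neg_neg s, ← hs, lie_neg, leibniz_lie, hp, a1]; simp
  have b2 : (-3 : ℂ) • ⁅x, s⁆ = (-3 : ℂ) • ⁅p, r⁆ := by
    rw [← lie_smul, ← a4, leibniz_lie, hq, hr]; simp
  have b3 : ⁅x, s⁆ = ⁅p, r⁆ := by
    have := congrArg (fun z => (-(3 : ℂ)⁻¹) • z) b2
    simpa [smul_smul] using this
  have a6 : ⁅p, r⁆ = 0 := by
    have h : ⁅p, r⁆ = -⁅p, r⁆ := b3.symm.trans b1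
    have h' : (2 : ℂ) • ⁅p, r⁆ = 0 := by
      rw [two_smul]; nth_rewrite 1 [h]; exact neg_add_cancel _
    simpa using h'
  have a5 : ⁅x, s⁆ = 0 := b3.trans a6
  have hs' : s = (-(3 : ℂ)⁻¹) • ⁅p, q⁆ := by rw [a4]; module
  have a7 : ⁅y, s⁆ = 0 := by
    rw [hs', lie_smul, leibniz_lie, a2, a3]; simp
  have a8 : ⁅q, r⁆ = 0 := by
    rw [hq', smul_lie, lie_lie, a6, a1]; simp
  have a9 : ⁅s, r⁆ = 0 := by
    rw [hs', smul_lie, lie_lie, a8, a6]; simp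
  exact ⟨a1, a2, a3, a4, a5, a6, a7, a8, a9⟩

variable (g : G2Gens L)

theorem posE : ⁅g.E10, g.E31⁆ = 0 ∧ ⁅g.E01, g.E11⁆ = 0 ∧ ⁅g.E01, g.E21⁆ = 0 ∧
    ⁅g.E11, g.E21⁆ = (-3 : ℂ) • g.E32 ∧ ⁅g.E10, g.E32⁆ = 0 ∧
    ⁅g.E11, g.E31⁆ = 0 ∧ ⁅g.E01, g.E32⁆ = 0 ∧ ⁅g.E21, g.E31⁆ = 0 ∧ ⁅g.E32, g.E31⁆ = 0 := by
  apply pos_rel g.E10 g.E01 g.E11 g.E21 g.E31 g.E32 g.serreE1 g.serreE2 rfl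
  · rw [E21, ← lie_skew]; module
  · rw [E31, ← lie_skew]; module
  · rw [E32, ← lie_skew]

theorem posF : ⁅g.F10, -g.F31⁆ = 0 ∧ ⁅g.F01, -g.F11⁆ = 0 ∧ ⁅g.F01, g.F21⁆ = 0 ∧
    ⁅-g.F11, g.F21⁆ = (-3 : ℂ) • g.F32 ∧ ⁅g.F10, g.F32⁆ = 0 ∧
    ⁅-g.F11, -g.F31⁆ = 0 ∧ ⁅g.F01, g.F32⁆ = 0 ∧ ⁅g.F21, -g.F31⁆ = 0 ∧
    ⁅g.F32, -g.F31⁆ = 0 := by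
  apply pos_rel g.F10 g.F01 (-g.F11) g.F21 (-g.F31) g.F32 g.serreF1 g.serreF2
  · rw [F11, lie_skew]
  · rw [F21, lie_neg]; module
  · rw [F31]; module
  · rw [F32, lie_neg]

theorem t_E10_E10 : ⁅g.E10, g.E10⁆ = 0 := lie_self _
theorem t_E11_E11 : ⁅g.E11, g.E11⁆ = 0 := lie_self _
theorem t_E10_E01 : ⁅g.E10, g.E01⁆ = g.E11 := rfl
theorem t_E01_E10 : ⁅g.E01, g.E10⁆ = -g.E11 := by rw [← lie_skew, t_E10_E01]
theorem t_E11_E10 : ⁅g.E11, g.E10⁆ = (2 : ℂ) • g.E21 := by rw [E21]; module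
theorem t_E21_E10 : ⁅g.E21, g.E10⁆ = (3 : ℂ) • g.E31 := by rw [E31]; module
theorem t_E31_E01 : ⁅g.E31, g.E01⁆ = g.E32 := rfl
theorem t_E10_E11 : ⁅g.E10, g.E11⁆ = (-2 : ℂ) • g.E21 := by
  rw [← lie_skew, t_E11_E10]; module
theorem t_E10_E21 : ⁅g.E10, g.E21⁆ = (-3 : ℂ) • g.E31 := by
  rw [← lie_skew, t_E21_E10]; module
theorem t_E01_E21 : ⁅g.E01, g.E21⁆ = 0 := g.posE.2.2.1
theorem t_E01_E31 : ⁅g.E01, g.E31⁆ = -g.E32 := by rw [← lie_skew, t_E31_E01]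
theorem t_E11_E01 : ⁅g.E11, g.E01⁆ = 0 := by rw [← lie_skew, g.posE.2.1, neg_zero]
theorem t_E11_E21 : ⁅g.E11, g.E21⁆ = (-3 : ℂ) • g.E32 := g.posE.2.2.2.1
theorem t_E11_E31 : ⁅g.E11, g.E31⁆ = 0 := g.posE.2.2.2.2.2.1
theorem r_F10_F11 : ⁅g.F10, g.F11⁆ = (2 : ℂ) • g.F21 := by rw [F21]; module
theorem r_F10_F21 : ⁅g.F10, g.F21⁆ = (3 : ℂ) • g.F31 := by rw [F31]; module
theorem r_F10_F31 : ⁅g.F10, g.F31⁆ = 0 := neg_eq_zero.1 ((lie_neg _ _).symm.trans g.posF.1)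
theorem r_F01_F11 : ⁅g.F01, g.F11⁆ = 0 := neg_eq_zero.1 ((lie_neg _ _).symm.trans g.posF.2.1)
theorem r_F01_F21 : ⁅g.F01, g.F21⁆ = 0 := g.posF.2.2.1
theorem s_F10_F01 : ⁅g.F10, g.F01⁆ = -g.F11 := by rw [F11, lie_skew]
theorem t_F32_F01 : ⁅g.F32, g.F01⁆ = 0 := by
  rw [← lie_skew, g.posF.2.2.2.2.2.2.1, neg_zero]
theorem t_F32_F31 : ⁅g.F32, g.F31⁆ = 0 := 
  neg_eq_zero.1 ((lie_neg _ _).symm.trans g.posF.2.2.2.2.2.2.2.2)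
theorem t_F32_F32 : ⁅g.F32, g.F32⁆ = 0 := lie_self _

theorem r_F01_F10 : ⁅g.F01, g.F10⁆ = g.F11 := rfl
theorem r_F01_F31 : ⁅g.F01, g.F31⁆ = g.F32 := rfl
theorem r_F01_H10 : ⁅g.F01, g.H10⁆ = (-3 : ℂ) • g.F01 := by
  rw [← lie_skew, g.hH10F01]; module
theorem t_F32_F21 : ⁅g.F32, g.F21⁆ = 0 := by
  have h1 : ⁅g.F10, g.F32⁆ = 0 := g.posF.2.2.2.2.1
  have h2 : ⁅g.F11, g.F32⁆ = 0 := by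
    rw [F11, lie_lie, h1, g.posF.2.2.2.2.2.2.1, lie_zero, lie_zero, sub_zero]
  rw [← lie_skew, F21, smul_lie, lie_lie, h1, h2]; simp

theorem t_E10_H10 : ⁅g.E10, g.H10⁆ = (-2 : ℂ) • g.E10 := by
  rw [← lie_skew, g.hH10E10]; module
theorem t_E10_H01 : ⁅g.E10, g.H01⁆ = (1 : ℂ) • g.E10 := by
  rw [← lie_skew, g.hH01E10]; module
theorem t_E01_H10 : ⁅g.E01, g.H10⁆ = (3 : ℂ) • g.E01 := by
  rw [← lie_skew, g.hH10E01]; module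
theorem t_E01_H01 : ⁅g.E01, g.H01⁆ = (-2 : ℂ) • g.E01 := by
  rw [← lie_skew, g.hH01E01]; module
theorem t_H10_F10 : ⁅g.H10, g.F10⁆ = (-2 : ℂ) • g.F10 := by
  rw [g.hH10F10]
theorem t_H10_F01 : ⁅g.H10, g.F01⁆ = (3 : ℂ) • g.F01 := by
  rw [g.hH10F01]
theorem t_H10_F11 : ⁅g.H10, g.F11⁆ = (1 : ℂ) • g.F11 := by
  simp only [F11, lie_smul, leibniz_lie g.H10 g.F01, g.t_H10_F01, g.t_H10_F10, smul_lie, zero_lie, lie_zero]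
  module
theorem t_H10_F21 : ⁅g.H10, g.F21⁆ = (-1 : ℂ) • g.F21 := by
  simp only [F21, lie_smul, leibniz_lie g.H10 g.F10, g.t_H10_F10, g.t_H10_F11, smul_lie, zero_lie, lie_zero]
  module
theorem t_H10_F31 : ⁅g.H10, g.F31⁆ = (-3 : ℂ) • g.F31 := by
  simp only [F31, lie_smul, leibniz_lie g.H10 g.F10, g.t_H10_F10, g.t_H10_F21, smul_lie, zero_lie, lie_zero]
  module
theorem t_H10_F32 : ⁅g.H10, g.F32⁆ = 0 := by
  simp only [F32, lie_smul, leibniz_lie g.H10 g.F01, g.t_H10_F01, g.t_H10_F31, smul_lie, zero_lie, lie_zero]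
  module
theorem t_H01_F10 : ⁅g.H01, g.F10⁆ = (1 : ℂ) • g.F10 := by
  rw [g.hH01F10]
theorem t_H01_F01 : ⁅g.H01, g.F01⁆ = (-2 : ℂ) • g.F01 := by
  rw [g.hH01F01]
theorem t_H01_F11 : ⁅g.H01, g.F11⁆ = (-1 : ℂ) • g.F11 := by
  simp only [F11, lie_smul, leibniz_lie g.H01 g.F01, g.t_H01_F01, g.t_H01_F10, smul_lie, zero_lie, lie_zero]
  module
theorem t_H01_F21 : ⁅g.H01, g.F21⁆ = 0 := by
  simp only [F21, lie_smul, leibniz_lie g.H01 g.F10, g.t_H01_F10, g.t_H01_F11, smul_lie, zero_lie, lie_zero]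
  module
theorem t_H01_F31 : ⁅g.H01, g.F31⁆ = (1 : ℂ) • g.F31 := by
  simp only [F31, lie_smul, leibniz_lie g.H01 g.F10, g.t_H01_F10, g.t_H01_F21, smul_lie, zero_lie, lie_zero]
  module
theorem t_H01_F32 : ⁅g.H01, g.F32⁆ = (-1 : ℂ) • g.F32 := by
  simp only [F32, lie_smul, leibniz_lie g.H01 g.F01, g.t_H01_F01, g.t_H01_F31, smul_lie, zero_lie, lie_zero]
  module
theorem t_E10_F10 : ⁅g.E10, g.F10⁆ = (1 : ℂ) • g.H10 := by
  simp [g.hE10F10]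
theorem t_E10_F01 : ⁅g.E10, g.F01⁆ = 0 := by
  simp [g.hE10F01]
theorem t_E10_F11 : ⁅g.E10, g.F11⁆ = (-3 : ℂ) • g.F01 := by
  rw [F11, leibniz_lie]
  simp only [lie_smul, g.t_E10_F01, g.t_E10_F10, g.t_H10_F10, g.t_H01_F10, smul_lie, zero_lie, lie_zero, r_F01_F10, r_F10_F11, r_F10_F21, r_F01_F21,
    r_F01_F11, r_F10_F31, r_F01_F31, r_F01_H10, lie_self, s_F10_F01]
  module
theorem t_E10_F21 : ⁅g.E10, g.F21⁆ = (2 : ℂ) • g.F11 := by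
  rw [F21, lie_smul, leibniz_lie]
  simp only [lie_smul, g.t_E10_F10, g.t_E10_F11, g.t_H10_F11, g.t_H01_F11, smul_lie, zero_lie, lie_zero, r_F01_F10, r_F10_F11, r_F10_F21, r_F01_F21,
    r_F01_F11, r_F10_F31, r_F01_F31, r_F01_H10, lie_self, s_F10_F01]
  module
theorem t_E10_F31 : ⁅g.E10, g.F31⁆ = (1 : ℂ) • g.F21 := by
  rw [F31, lie_smul, leibniz_lie]
  simp only [lie_smul, g.t_E10_F10, g.t_E10_F21, g.t_H10_F21, g.t_H01_F21, smul_lie, zero_lie, lie_zero, r_F01_F10, r_F10_F11, r_F10_F21, r_F01_F21,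
    r_F01_F11, r_F10_F31, r_F01_F31, r_F01_H10, lie_self, s_F10_F01]
  module
theorem t_E10_F32 : ⁅g.E10, g.F32⁆ = 0 := by
  rw [F32, leibniz_lie]
  simp only [lie_smul, g.t_E10_F01, g.t_E10_F31, g.t_H10_F31, g.t_H01_F31, smul_lie, zero_lie, lie_zero, r_F01_F10, r_F10_F11, r_F10_F21, r_F01_F21,
    r_F01_F11, r_F10_F31, r_F01_F31, r_F01_H10, lie_self, s_F10_F01]
  module
theorem t_E01_F10 : ⁅g.E01, g.F10⁆ = 0 := by
  simp [g.hE01F10]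
theorem t_E01_F01 : ⁅g.E01, g.F01⁆ = (1 : ℂ) • g.H01 := by
  simp [g.hE01F01]
theorem t_E01_F11 : ⁅g.E01, g.F11⁆ = (1 : ℂ) • g.F10 := by
  rw [F11, leibniz_lie]
  simp only [lie_smul, g.t_E01_F01, g.t_E01_F10, g.t_H10_F10, g.t_H01_F10, smul_lie, zero_lie, lie_zero, r_F01_F10, r_F10_F11, r_F10_F21, r_F01_F21,
    r_F01_F11, r_F10_F31, r_F01_F31, r_F01_H10, lie_self, s_F10_F01]
  module
theorem t_E01_F21 : ⁅g.E01, g.F21⁆ = 0 := by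
  rw [F21, lie_smul, leibniz_lie]
  simp only [lie_smul, g.t_E01_F10, g.t_E01_F11, g.t_H10_F11, g.t_H01_F11, smul_lie, zero_lie, lie_zero, r_F01_F10, r_F10_F11, r_F10_F21, r_F01_F21,
    r_F01_F11, r_F10_F31, r_F01_F31, r_F01_H10, lie_self, s_F10_F01]
  module
theorem t_E01_F31 : ⁅g.E01, g.F31⁆ = 0 := by
  rw [F31, lie_smul, leibniz_lie]
  simp only [lie_smul, g.t_E01_F10, g.t_E01_F21, g.t_H10_F21, g.t_H01_F21, smul_lie, zero_lie, lie_zero, r_F01_F10, r_F10_F11, r_F10_F21, r_F01_F21,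
    r_F01_F11, r_F10_F31, r_F01_F31, r_F01_H10, lie_self, s_F10_F01]
  module
theorem t_E01_F32 : ⁅g.E01, g.F32⁆ = (1 : ℂ) • g.F31 := by
  rw [F32, leibniz_lie]
  simp only [lie_smul, g.t_E01_F01, g.t_E01_F31, g.t_H10_F31, g.t_H01_F31, smul_lie, zero_lie, lie_zero, r_F01_F10, r_F10_F11, r_F10_F21, r_F01_F21,
    r_F01_F11, r_F10_F31, r_F01_F31, r_F01_H10, lie_self, s_F10_F01]
  module
theorem t_E11_H10 : ⁅g.E11, g.H10⁆ = (1 : ℂ) • g.E11 := by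
  conv_lhs => rw [E11, lie_lie]
  simp only [lie_smul, lie_add, lie_zero, g.t_E10_H10, g.t_E01_H10, g.t_E01_E10, g.t_E10_E01]
  module
theorem t_E11_H01 : ⁅g.E11, g.H01⁆ = (-1 : ℂ) • g.E11 := by
  conv_lhs => rw [E11, lie_lie]
  simp only [lie_smul, lie_add, lie_zero, g.t_E10_H01, g.t_E01_H01, g.t_E01_E10, g.t_E10_E01]
  module
theorem t_E11_F10 : ⁅g.E11, g.F10⁆ = (-3 : ℂ) • g.E01 := by
  conv_lhs => rw [E11, lie_lie]
  simp only [lie_smul, lie_add, lie_zero, g.t_E10_F10, g.t_E01_F10, g.t_E01_H10]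
  module
theorem t_E11_F01 : ⁅g.E11, g.F01⁆ = (1 : ℂ) • g.E10 := by
  conv_lhs => rw [E11, lie_lie]
  simp only [lie_smul, lie_add, lie_zero, g.t_E10_F01, g.t_E01_F01, g.t_E10_H01]
  module
theorem t_E11_F11 : ⁅g.E11, g.F11⁆ = (1 : ℂ) • g.H10 + (3 : ℂ) • g.H01 := by
  conv_lhs => rw [E11, lie_lie]
  simp only [lie_smul, lie_add, lie_zero, g.t_E10_F11, g.t_E01_F11, g.t_E01_F01, g.t_E10_F10]
  module
theorem t_E11_F21 : ⁅g.E11, g.F21⁆ = (-2 : ℂ) • g.F10 := by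
  conv_lhs => rw [E11, lie_lie]
  simp only [lie_smul, lie_add, lie_zero, g.t_E10_F21, g.t_E01_F21, g.t_E01_F11]
  module
theorem t_E11_F31 : ⁅g.E11, g.F31⁆ = 0 := by
  conv_lhs => rw [E11, lie_lie]
  simp only [lie_smul, lie_add, lie_zero, g.t_E10_F31, g.t_E01_F31, g.t_E01_F21]
  module
theorem t_E11_F32 : ⁅g.E11, g.F32⁆ = (1 : ℂ) • g.F21 := by
  conv_lhs => rw [E11, lie_lie]
  simp only [lie_smul, lie_add, lie_zero, g.t_E10_F32, g.t_E01_F32, g.t_E10_F31]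
  module
theorem t_E21_H10 : ⁅g.E21, g.H10⁆ = (-1 : ℂ) • g.E21 := by
  conv_lhs => rw [E21, smul_lie, lie_lie]
  simp only [lie_smul, lie_add, lie_zero, g.t_E11_H10, g.t_E10_H10, g.t_E10_E11, g.t_E11_E10]
  module
theorem t_E21_H01 : ⁅g.E21, g.H01⁆ = 0 := by
  conv_lhs => rw [E21, smul_lie, lie_lie]
  simp only [lie_smul, lie_add, lie_zero, g.t_E11_H01, g.t_E10_H01, g.t_E10_E11, g.t_E11_E10]
  module
theorem t_E21_F10 : ⁅g.E21, g.F10⁆ = (2 : ℂ) • g.E11 := by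
  conv_lhs => rw [E21, smul_lie, lie_lie]
  simp only [lie_smul, lie_add, lie_zero, g.t_E11_F10, g.t_E10_F10, g.t_E10_E01, g.t_E11_H10]
  module
theorem t_E21_F01 : ⁅g.E21, g.F01⁆ = 0 := by
  conv_lhs => rw [E21, smul_lie, lie_lie]
  simp only [lie_smul, lie_add, lie_zero, g.t_E11_F01, g.t_E10_F01, g.t_E10_E10]
  module
theorem t_E21_F11 : ⁅g.E21, g.F11⁆ = (-2 : ℂ) • g.E10 := by
  conv_lhs => rw [E21, smul_lie, lie_lie]
  simp only [lie_smul, lie_add, lie_zero, g.t_E11_F11, g.t_E10_F11, g.t_E10_H01, g.t_E10_H10, g.t_E11_F01]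
  module
theorem t_E21_F21 : ⁅g.E21, g.F21⁆ = (2 : ℂ) • g.H10 + (3 : ℂ) • g.H01 := by
  conv_lhs => rw [E21, smul_lie, lie_lie]
  simp only [lie_smul, lie_add, lie_zero, g.t_E11_F21, g.t_E10_F21, g.t_E10_F10, g.t_E11_F11]
  module
theorem t_E21_F31 : ⁅g.E21, g.F31⁆ = (-1 : ℂ) • g.F10 := by
  conv_lhs => rw [E21, smul_lie, lie_lie]
  simp only [lie_smul, lie_add, lie_zero, g.t_E11_F31, g.t_E10_F31, g.t_E11_F21]
  module
theorem t_E21_F32 : ⁅g.E21, g.F32⁆ = (-1 : ℂ) • g.F11 := by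
  conv_lhs => rw [E21, smul_lie, lie_lie]
  simp only [lie_smul, lie_add, lie_zero, g.t_E11_F32, g.t_E10_F32, g.t_E10_F21]
  module
theorem t_E31_H10 : ⁅g.E31, g.H10⁆ = (-3 : ℂ) • g.E31 := by
  conv_lhs => rw [E31, smul_lie, lie_lie]
  simp only [lie_smul, lie_add, lie_zero, g.t_E21_H10, g.t_E10_H10, g.t_E10_E21, g.t_E21_E10]
  module
theorem t_E31_H01 : ⁅g.E31, g.H01⁆ = (1 : ℂ) • g.E31 := by
  conv_lhs => rw [E31, smul_lie, lie_lie]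
  simp only [lie_smul, lie_add, lie_zero, g.t_E21_H01, g.t_E10_H01, g.t_E21_E10]
  module
theorem t_E31_F10 : ⁅g.E31, g.F10⁆ = (1 : ℂ) • g.E21 := by
  conv_lhs => rw [E31, smul_lie, lie_lie]
  simp only [lie_smul, lie_add, lie_zero, g.t_E21_F10, g.t_E10_F10, g.t_E10_E11, g.t_E21_H10]
  module
theorem t_E31_F01 : ⁅g.E31, g.F01⁆ = 0 := by
  conv_lhs => rw [E31, smul_lie, lie_lie]
  simp only [lie_smul, lie_add, lie_zero, g.t_E21_F01, g.t_E10_F01, ]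
  module
theorem t_E31_F11 : ⁅g.E31, g.F11⁆ = 0 := by
  conv_lhs => rw [E31, smul_lie, lie_lie]
  simp only [lie_smul, lie_add, lie_zero, g.t_E21_F11, g.t_E10_F11, g.t_E10_E10, g.t_E21_F01]
  module
theorem t_E31_F21 : ⁅g.E31, g.F21⁆ = (-1 : ℂ) • g.E10 := by
  conv_lhs => rw [E31, smul_lie, lie_lie]
  simp only [lie_smul, lie_add, lie_zero, g.t_E21_F21, g.t_E10_F21, g.t_E10_H01, g.t_E10_H10, g.t_E21_F11]
  module
theorem t_E31_F31 : ⁅g.E31, g.F31⁆ = (1 : ℂ) • g.H10 + (1 : ℂ) • g.H01 := by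
  conv_lhs => rw [E31, smul_lie, lie_lie]
  simp only [lie_smul, lie_add, lie_zero, g.t_E21_F31, g.t_E10_F31, g.t_E10_F10, g.t_E21_F21]
  module
theorem t_E31_F32 : ⁅g.E31, g.F32⁆ = (-1 : ℂ) • g.F01 := by
  conv_lhs => rw [E31, smul_lie, lie_lie]
  simp only [lie_smul, lie_add, lie_zero, g.t_E21_F32, g.t_E10_F32, g.t_E10_F11]
  module
theorem t_E32_H10 : ⁅g.E32, g.H10⁆ = 0 := by
  conv_lhs => rw [E32, lie_lie]
  simp only [lie_smul, lie_add, lie_zero, g.t_E31_H10, g.t_E01_H10, g.t_E01_E31, g.t_E31_E01]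
  module
theorem t_E32_H01 : ⁅g.E32, g.H01⁆ = (-1 : ℂ) • g.E32 := by
  conv_lhs => rw [E32, lie_lie]
  simp only [lie_smul, lie_add, lie_zero, g.t_E31_H01, g.t_E01_H01, g.t_E01_E31, g.t_E31_E01]
  module
theorem t_E32_F10 : ⁅g.E32, g.F10⁆ = 0 := by
  conv_lhs => rw [E32, lie_lie]
  simp only [lie_smul, lie_add, lie_zero, g.t_E31_F10, g.t_E01_F10, g.t_E01_E21]
  module
theorem t_E32_F01 : ⁅g.E32, g.F01⁆ = (1 : ℂ) • g.E31 := by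
  conv_lhs => rw [E32, lie_lie]
  simp only [lie_smul, lie_add, lie_zero, g.t_E31_F01, g.t_E01_F01, g.t_E31_H01]
  module
theorem t_E32_F11 : ⁅g.E32, g.F11⁆ = (1 : ℂ) • g.E21 := by
  conv_lhs => rw [E32, lie_lie]
  simp only [lie_smul, lie_add, lie_zero, g.t_E31_F11, g.t_E01_F11, g.t_E31_F10]
  module
theorem t_E32_F21 : ⁅g.E32, g.F21⁆ = (-1 : ℂ) • g.E11 := by
  conv_lhs => rw [E32, lie_lie]
  simp only [lie_smul, lie_add, lie_zero, g.t_E31_F21, g.t_E01_F21, g.t_E01_E10]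
  module
theorem t_E32_F31 : ⁅g.E32, g.F31⁆ = (-1 : ℂ) • g.E01 := by
  conv_lhs => rw [E32, lie_lie]
  simp only [lie_smul, lie_add, lie_zero, g.t_E31_F31, g.t_E01_F31, g.t_E01_H01, g.t_E01_H10]
  module
theorem t_E32_F32 : ⁅g.E32, g.F32⁆ = (1 : ℂ) • g.H10 + (2 : ℂ) • g.H01 := by
  conv_lhs => rw [E32, lie_lie]
  simp only [lie_smul, lie_add, lie_zero, g.t_E31_F32, g.t_E01_F32, g.t_E01_F01, g.t_E31_F31]
  module
theorem t_F32_H10 : ⁅g.F32, g.H10⁆ = 0 := by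
  rw [← lie_skew, g.t_H10_F32]; module
theorem t_F32_H01 : ⁅g.F32, g.H01⁆ = (1 : ℂ) • g.F32 := by
  rw [← lie_skew, g.t_H01_F32]; module
theorem t_F32_E10 : ⁅g.F32, g.E10⁆ = 0 := by
  rw [← lie_skew, g.t_E10_F32]; module
theorem t_F32_E01 : ⁅g.F32, g.E01⁆ = (-1 : ℂ) • g.F31 := by
  rw [← lie_skew, g.t_E01_F32]; module
theorem t_F32_E11 : ⁅g.F32, g.E11⁆ = (-1 : ℂ) • g.F21 := by
  rw [← lie_skew, g.t_E11_F32]; module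
theorem t_F32_E21 : ⁅g.F32, g.E21⁆ = (1 : ℂ) • g.F11 := by
  rw [← lie_skew, g.t_E21_F32]; module
theorem t_F32_E31 : ⁅g.F32, g.E31⁆ = (1 : ℂ) • g.F01 := by
  rw [← lie_skew, g.t_E31_F32]; module
theorem t_F32_E32 : ⁅g.F32, g.E32⁆ = (-1 : ℂ) • g.H10 + (-2 : ℂ) • g.H01 := by
  rw [← lie_skew, g.t_E32_F32]; module

local notation "U" => UniversalEnvelopingAlgebra ℂ L

theorem adU_add (x : L) (f h : U) : adU x (f + h) = adU x f + adU x h := by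
  simp only [adU]; noncomm_ring
theorem adU_sub (x : L) (f h : U) : adU x (f - h) = adU x f - adU x h := by
  simp only [adU]; noncomm_ring
theorem adU_mul (x : L) (f h : U) : adU x (f * h) = adU x f * h + f * adU x h := by
  simp only [adU]; noncomm_ring
theorem adU_smul (x : L) (c : ℂ) (f : U) : adU x (c • f) = c • adU x f := by
  simp only [adU, mul_smul_comm, smul_mul_assoc, smul_sub]
theorem adU_zero (x : L) : adU x (0 : U) = 0 := by simp [adU]
theorem ιU_lie (x y : L) : ιU ⁅x, y⁆ = ιU x * ιU y - ιU y * ιU x := by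
  simp only [ιU, LieHom.map_lie]; rfl
theorem adU_ι (x y : L) : adU x (ιU y) = ιU ⁅x, y⁆ := by rw [ιU_lie, adU]
theorem ιU_add (x y : L) : ιU (x + y) = ιU x + ιU y := by simp [ιU]
theorem ιU_neg (x : L) : ιU (-x) = -ιU x := by simp [ιU]
theorem ιU_smul (c : ℂ) (x : L) : ιU (c • x) = c • ιU x := by simp [ιU]
theorem ιU_zero : ιU (0 : L) = 0 := by simp [ιU]

/-- The left ideal generated by `E₁₀` and `E₀₁`. -/
noncomputable def nIdeal : Submodule U U := Submodule.span U {ιU g.E10, ιU g.E01}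

/-- The universal module `U / U𝔫₊`. -/
abbrev VM := U ⧸ g.nIdeal

/-- The generator of the universal module. -/
noncomputable def vac : g.VM := Submodule.Quotient.mk 1

/-- The action of a Lie algebra element on the universal module. -/
noncomputable def act (x : L) : g.VM →ₗ[ℂ] g.VM := Algebra.lsmul ℂ ℂ g.VM (ιU x)

theorem act_apply (x : L) (m : g.VM) : ιU x • m = g.act x m := rfl

theorem act_add (x y : L) (m : g.VM) : g.act (x + y) m = g.act x m + g.act y m := by
  simp only [← act_apply, ιU_add, add_smul]
theorem act_smul (c : ℂ) (x : L) (m : g.VM) : g.act (c • x) m = c • g.act x m := by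
  simp only [← act_apply, ιU_smul, smul_assoc]
theorem act_zero (m : g.VM) : g.act 0 m = 0 := by
  simp only [← act_apply, ιU_zero, zero_smul]
theorem act_comm (x y : L) (m : g.VM) :
    g.act x (g.act y m) = g.act y (g.act x m) + g.act ⁅x, y⁆ m := by
  simp only [← act_apply, ιU_lie, sub_smul, mul_smul]; abel

theorem eqModN_of_smul (f h : U) (H : f • g.vac = h • g.vac) : g.EqModN f h := by
  have h1 : f - h ∈ g.nIdeal := by
    rw [← Submodule.Quotient.eq]
    have key : ∀ k : U, k • g.vac = Submodule.Quotient.mk k := fun k => by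
      rw [vac, ← Submodule.Quotient.mk_smul, smul_eq_mul, mul_one]
    rw [← key, ← key, H]
  obtain ⟨A, B, hAB⟩ := Submodule.mem_span_pair.1 h1
  exact ⟨A, B, hAB.symm⟩

theorem vac_E10 : g.act g.E10 g.vac = 0 := by
  rw [← act_apply, vac, ← Submodule.Quotient.mk_smul, Submodule.Quotient.mk_eq_zero, smul_eq_mul,
    mul_one]
  exact Submodule.subset_span (by simp)
theorem vac_E01 : g.act g.E01 g.vac = 0 := by
  rw [← act_apply, vac, ← Submodule.Quotient.mk_smul, Submodule.Quotient.mk_eq_zero, smul_eq_mul,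
    mul_one]
  exact Submodule.subset_span (by simp)

theorem vac_lie (x y : L) (hx : g.act x g.vac = 0) (hy : g.act y g.vac = 0) :
    g.act ⁅x, y⁆ g.vac = 0 := by
  have := g.act_comm x y g.vac
  simpa [hx, hy] using this.symm
theorem vac_E11 : g.act g.E11 g.vac = 0 := g.vac_lie _ _ g.vac_E10 g.vac_E01
theorem vac_E21 : g.act g.E21 g.vac = 0 := by
  rw [E21, act_smul, g.vac_lie _ _ g.vac_E11 g.vac_E10, smul_zero]
theorem vac_E31 : g.act g.E31 g.vac = 0 := by
  rw [E31, act_smul, g.vac_lie _ _ g.vac_E21 g.vac_E10, smul_zero]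
theorem vac_E32 : g.act g.E32 g.vac = 0 := g.vac_lie _ _ g.vac_E31 g.vac_E01

theorem F32_iter : (adU g.F32)^[2] g.bU =
      (-2 : ℂ) • (ιU g.F01 * ιU g.F21)
      + (2 : ℂ) • (ιU g.F32 * ιU g.E10) ∧
    (adU g.F32)^[3] g.cU =
      (-6 : ℂ) • (ιU g.F01 * ιU g.F01 * ιU g.F31)
      + (6 : ℂ) • (ιU g.H10 * ιU g.F01 * ιU g.F32)
      + (6 : ℂ) • (ιU g.F32 * ιU g.F01 * ιU g.H01)
      + (6 : ℂ) • (ιU g.F32 * ιU g.E31 * ιU g.F32)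
      + (12 : ℂ) • (ιU g.H01 * ιU g.F01 * ιU g.F32)
      + (-6 : ℂ) • (ιU g.H10 * ιU g.F32 * ιU g.F01)
      + (-6 : ℂ) • (ιU g.F32 * ιU g.H10 * ιU g.F01)
      + (-12 : ℂ) • (ιU g.F32 * ιU g.H01 * ιU g.F01)
      + (-12 : ℂ) • (ιU g.H01 * ιU g.F32 * ιU g.F01) := by
  constructor <;>
  · simp only [Function.iterate_succ, Function.iterate_zero, Function.comp_apply, id_eq, bU, cU, adU_add, adU_sub, adU_mul, adU_smul, adU_zero, adU_ι, ιU_add, ιU_neg, ιU_smul, ιU_zero,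
    smul_zero, mul_zero, zero_mul, add_zero, zero_add, sub_zero, zero_sub, smul_add, smul_sub,
    mul_add, add_mul, mul_smul_comm, smul_mul_assoc, smul_smul,
      g.t_F32_E10, g.t_F32_E01, g.t_F32_E11, g.t_F32_E21, g.t_F32_E31, g.t_F32_E32, g.t_F32_H10,
      g.t_F32_H01, g.t_F32_F01, g.t_F32_F21, g.t_F32_F31, g.t_F32_F32]
    module

theorem E11_iter : ((adU g.E11)^[2] ((-2 : ℂ) • (ιU g.F01 * ιU g.F21)
      + (2 : ℂ) • (ιU g.F32 * ιU g.E10))) • g.vac =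
      ((-12 : ℂ) • ιU g.H01) • g.vac ∧
    ((adU g.E11)^[3] ((-6 : ℂ) • (ιU g.F01 * ιU g.F01 * ιU g.F31)
      + (6 : ℂ) • (ιU g.H10 * ιU g.F01 * ιU g.F32)
      + (6 : ℂ) • (ιU g.F32 * ιU g.F01 * ιU g.H01)
      + (6 : ℂ) • (ιU g.F32 * ιU g.E31 * ιU g.F32)
      + (12 : ℂ) • (ιU g.H01 * ιU g.F01 * ιU g.F32)
      + (-6 : ℂ) • (ιU g.H10 * ιU g.F32 * ιU g.F01)
      + (-6 : ℂ) • (ιU g.F32 * ιU g.H10 * ιU g.F01)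
      + (-12 : ℂ) • (ιU g.F32 * ιU g.H01 * ιU g.F01)
      + (-12 : ℂ) • (ιU g.H01 * ιU g.F32 * ιU g.F01))) • g.vac =
      ((-36 : ℂ) • (ιU g.H01 * (ιU g.H31 + 2))) • g.vac := by
  have h2 : (2 : U) • g.vac = (2 : ℂ) • g.vac := by
    rw [two_smul, two_smul]
  constructor <;>
  · simp only [Function.iterate_succ, Function.iterate_zero, Function.comp_apply, id_eq, adU_add, adU_sub, adU_mul, adU_smul, adU_zero, adU_ι, ιU_add, ιU_neg, ιU_smul, ιU_zero,
    smul_zero, mul_zero, zero_mul, add_zero, zero_add, sub_zero, zero_sub, smul_add, smul_sub,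
    mul_add, add_mul, mul_smul_comm, smul_mul_assoc, smul_smul,
      g.t_E11_E10, g.t_E11_E01, g.t_E11_E11, g.t_E11_E21, g.t_E11_E31, g.t_E11_H10, g.t_E11_H01,
      g.t_E11_F10, g.t_E11_F01, g.t_E11_F11, g.t_E11_F21, g.t_E11_F31, g.t_E11_F32]
    simp only [H31, ιU_add, add_smul, sub_smul, mul_smul, smul_assoc, act_apply, map_add, map_sub, map_smul,
    map_neg, map_zero, act_add, act_smul, act_zero, smul_zero, add_zero, zero_add, h2,
      g.act_comm g.E10 g.H10, g.act_comm g.E10 g.H01, g.act_comm g.E10 g.F10, g.act_comm g.E10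
      g.F01, g.act_comm g.E10 g.F11, g.act_comm g.E10 g.F21, g.act_comm g.E10 g.F31, g.act_comm
      g.E10 g.F32, g.act_comm g.E01 g.H10, g.act_comm g.E01 g.H01, g.act_comm g.E01 g.F10,
      g.act_comm g.E01 g.F01, g.act_comm g.E01 g.F11, g.act_comm g.E01 g.F21, g.act_comm g.E01
      g.F31, g.act_comm g.E01 g.F32, g.act_comm g.E11 g.H10, g.act_comm g.E11 g.H01, g.act_comm
      g.E11 g.F10, g.act_comm g.E11 g.F01, g.act_comm g.E11 g.F11, g.act_comm g.E11 g.F21,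
      g.act_comm g.E11 g.F31, g.act_comm g.E11 g.F32, g.act_comm g.E21 g.H10, g.act_comm g.E21
      g.H01, g.act_comm g.E21 g.F10, g.act_comm g.E21 g.F01, g.act_comm g.E21 g.F11, g.act_comm
      g.E21 g.F21, g.act_comm g.E21 g.F31, g.act_comm g.E21 g.F32, g.act_comm g.E31 g.H10,
      g.act_comm g.E31 g.H01, g.act_comm g.E31 g.F10, g.act_comm g.E31 g.F01, g.act_comm g.E31
      g.F11, g.act_comm g.E31 g.F21, g.act_comm g.E31 g.F31, g.act_comm g.E31 g.F32, g.act_comm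
      g.E32 g.H10, g.act_comm g.E32 g.H01, g.act_comm g.E32 g.F10, g.act_comm g.E32 g.F01,
      g.act_comm g.E32 g.F11, g.act_comm g.E32 g.F21, g.act_comm g.E32 g.F31, g.act_comm g.E32
      g.F32,
      g.t_E10_H10, g.t_E10_H01, g.t_E10_F10, g.t_E10_F01, g.t_E10_F11, g.t_E10_F21, g.t_E10_F31,
      g.t_E10_F32, g.t_E01_H10, g.t_E01_H01, g.t_E01_F10, g.t_E01_F01, g.t_E01_F11, g.t_E01_F21,
      g.t_E01_F31, g.t_E01_F32, g.t_E11_H10, g.t_E11_H01, g.t_E11_F10, g.t_E11_F01, g.t_E11_F11,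
      g.t_E11_F21, g.t_E11_F31, g.t_E11_F32, g.t_E21_H10, g.t_E21_H01, g.t_E21_F10, g.t_E21_F01,
      g.t_E21_F11, g.t_E21_F21, g.t_E21_F31, g.t_E21_F32, g.t_E31_H10, g.t_E31_H01, g.t_E31_F10,
      g.t_E31_F01, g.t_E31_F11, g.t_E31_F21, g.t_E31_F31, g.t_E31_F32, g.t_E32_H10, g.t_E32_H01,
      g.t_E32_F10, g.t_E32_F01, g.t_E32_F11, g.t_E32_F21, g.t_E32_F31, g.t_E32_F32,
      g.vac_E10, g.vac_E01, g.vac_E11, g.vac_E21, g.vac_E31, g.vac_E32]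
    try simp only [g.act_comm g.H10 g.H01, g.hH10H01, act_zero]
    module

end G2Gens

/-- **Lemma A.5, third family (lem-secondstep).**  Congruences in `U(𝔤)` modulo `U(𝔤)𝔫₊`
for the operators `(E₁₁^n F₃₂^n)_L` applied to `a`, `b`, `c`. -/
theorem G2Gens.E11F32_congruences
    {L : Type*} [LieRing L] [LieAlgebra ℂ L] (g : G2Gens L) :
    ∃ C₁ C₂ C₃ : ℚ, C₁ ≠ 0 ∧ C₂ ≠ 0 ∧ C₃ ≠ 0 ∧
      adU g.E11 (adU g.F32 g.aU) = (C₁ : ℂ) • ιU g.H11 ∧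
      g.EqModN ((adU g.E11)^[2] ((adU g.F32)^[2] g.bU)) ((C₂ : ℂ) • ιU g.H01) ∧
      g.EqModN ((adU g.E11)^[3] ((adU g.F32)^[3] g.cU))
        ((C₃ : ℂ) • (ιU g.H01 * (ιU g.H31 + 2))) := by
  
  refine ⟨1, -12, -36, by norm_num, by norm_num, by norm_num, ?_, ?_, ?_⟩
  · rw [aU, adU_ι, g.t_F32_E21, ιU_smul, adU_smul, adU_ι, g.t_E11_F11, H11]
    simp [ιU_add, ιU_smul]
  · apply eqModN_of_smul
    rw [g.F32_iter.1, g.E11_iter.1]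
    norm_num
  · apply eqModN_of_smul
    rw [g.F32_iter.2, g.E11_iter.2]
    norm_num
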